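/- arXiv:2102.09213 — 2 statements merged into one kernel-verified Lean document; each statement's English description precedes it below -/
import Mathlib

section
/- Let q be the Lorentzian quadratic form q(x) = 2x₁x₃ + x₂² on ℝ³ and let ρ be a continuous representation of O(1,2) on a finite-dimensional real normed vector space V. Let (g_k), (g'_k), (g''_k) be three sequences in O(1,2), and assume there exist nonzero vectors p, p', p'' ∈ ℝ³ with q(p) = q(p') = q(p'') = 0, pairwise non-proportional, and real scalars (λ_k), (λ'_k), (λ''_k) such that λ_k · g_k⁻¹(o) → p, λ'_k · (g'_k)⁻¹(o) → p', and λ''_k · (g''_k)⁻¹(o) → p'' in ℝ³, where o = e₁ − e₃. Then every vector v ∈ V that is stable under each of the three sets {g_k : k ∈ ℕ}, {g'_k : k ∈ ℕ}, {g''_k : k ∈ ℕ} is fixed by the identity component of O(1,2): ρ(g)v = v for every g in the connected component of the identity in O(1,2). -/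
open Matrix Filter Topology Bornology

noncomputable section

/-- The Lorentzian quadratic form `q(x) = 2 x₁ x_{n+1} + x₂² + ⋯ + xₙ²` on `ℝ^{n+1}`
(coordinates indexed by `Fin (n+1)`, so `x₁` is `x 0` and `x_{n+1}` is `x (Fin.last n)`). -/
def lorQ (n : ℕ) (x : Fin (n + 1) → ℝ) : ℝ :=
  2 * x 0 * x (Fin.last n) +
    ∑ i : Fin (n + 1), if i ≠ 0 ∧ i ≠ Fin.last n then x i ^ 2 else 0

/-- The polar bilinear form `B` of `lorQ`. -/
def lorB (n : ℕ) (x y : Fin (n + 1) → ℝ) : ℝ :=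
  x 0 * y (Fin.last n) + x (Fin.last n) * y 0 +
    ∑ i : Fin (n + 1), if i ≠ 0 ∧ i ≠ Fin.last n then x i * y i else 0

/-- The Lorentz group `O(1,n)`: linear automorphisms of `ℝ^{n+1}` preserving `lorQ`. -/
def LorentzGrp (n : ℕ) : Subgroup (GL (Fin (n + 1)) ℝ) where
  carrier := {g | ∀ x, lorQ n ((g : Matrix (Fin (n + 1)) (Fin (n + 1)) ℝ).mulVec x) = lorQ n x}
  one_mem' := by intro x; simp
  mul_mem' := by
    intro a b ha hb x
    have h : ((a * b : GL (Fin (n + 1)) ℝ) : Matrix (Fin (n + 1)) (Fin (n + 1)) ℝ).mulVec x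
        = (a : Matrix (Fin (n + 1)) (Fin (n + 1)) ℝ).mulVec
            ((b : Matrix (Fin (n + 1)) (Fin (n + 1)) ℝ).mulVec x) := by
      rw [Matrix.mulVec_mulVec]; rfl
    rw [h, ha, hb]
  inv_mem' := by
    intro g hg x
    have h : (g : Matrix (Fin (n + 1)) (Fin (n + 1)) ℝ).mulVec
        ((↑g⁻¹ : Matrix (Fin (n + 1)) (Fin (n + 1)) ℝ).mulVec x) = x := by
      rw [Matrix.mulVec_mulVec]
      have : (g : Matrix (Fin (n + 1)) (Fin (n + 1)) ℝ) * (↑g⁻¹ : Matrix (Fin (n + 1)) (Fin (n + 1)) ℝ)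
          = (1 : Matrix (Fin (n + 1)) (Fin (n + 1)) ℝ) := by
        rw [← Units.val_mul, mul_inv_cancel, Units.val_one]
      rw [this, Matrix.one_mulVec]
    calc lorQ n ((↑g⁻¹ : Matrix (Fin (n + 1)) (Fin (n + 1)) ℝ).mulVec x)
        = lorQ n ((g : Matrix (Fin (n + 1)) (Fin (n + 1)) ℝ).mulVec
            ((↑g⁻¹ : Matrix (Fin (n + 1)) (Fin (n + 1)) ℝ).mulVec x)) := (hg _).symm
      _ = lorQ n x := by rw [h]

/-- The action of an element of `O(1,n)` on a vector of `ℝ^{n+1}`. -/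
def lorAct {n : ℕ} (g : LorentzGrp n) (x : Fin (n + 1) → ℝ) : Fin (n + 1) → ℝ :=
  ((g : GL (Fin (n + 1)) ℝ) : Matrix (Fin (n + 1)) (Fin (n + 1)) ℝ).mulVec x

/-- The base point `o = e₁ − e_{n+1}`, a timelike vector. -/
def basePt (n : ℕ) : Fin (n + 1) → ℝ := fun i =>
  if i = 0 then 1 else if i = Fin.last n then -1 else 0

/-- `u` is a limit direction of a subset `G` of `O(1,n)`: `u` is nonzero lightlike, and some
sequence `λ_k • g_k⁻¹(o)`, with `g_k ∈ G`, converges to `u`. -/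
def IsLimitDirection (n : ℕ) (G : Set (LorentzGrp n)) (u : Fin (n + 1) → ℝ) : Prop :=
  u ≠ 0 ∧ lorQ n u = 0 ∧
    ∃ (g : ℕ → LorentzGrp n) (lam : ℕ → ℝ), (∀ k, g k ∈ G) ∧
      Tendsto (fun k => lam k • lorAct (g k)⁻¹ (basePt n)) atTop (𝓝 u)

/-- A vector `v` is stable under `G ⊆ O(1,n)` if its `ρ`-orbit under `G` is bounded. -/
def IsStableVec {n : ℕ} {V : Type*} [NormedAddCommGroup V] [NormedSpace ℝ V]
    (ρ : LorentzGrp n →* (V →L[ℝ] V)) (G : Set (LorentzGrp n)) (v : V) : Prop :=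
  IsBounded {w : V | ∃ g ∈ G, w = ρ g v}

/-- `SO°(E)`: the identity component of the subgroup of `O(1,n)` of elements leaving `E`
invariant and fixing pointwise every vector orthogonal to `E`. -/
def SOIdComp (n : ℕ) (E : Submodule ℝ (Fin (n + 1) → ℝ)) : Set (LorentzGrp n) :=
  connectedComponentIn
    {g : LorentzGrp n |
      E.map ((g : GL (Fin (n + 1)) ℝ) : Matrix (Fin (n + 1)) (Fin (n + 1)) ℝ).mulVecLin = E ∧
      ∀ x : Fin (n + 1) → ℝ, (∀ e ∈ E, lorB n x e = 0) → lorAct g x = x} 1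

/-!
A sequence of `O(1,2)` with limit direction `e₁` is, up to compact factors on the left,
`boost (t k) * lowerUnip (s k)` with `t k → -∞` and `s k → 0`. Hence, if `v` is stable under it, the
boosts stay bounded along negative times on vectors tending to `v`. Since `boost t` is a product of
unipotents whose parameters are polynomial in `exp (± t / 2)` and unipotents act by exponentials of
nilpotent endomorphisms, the boosts act diagonalizably with real weights, so `v` has no negative
weight. Together with the limit direction `e₃`, which excludes the positive weights, this shows that
`v` is fixed by the boosts: a vector stable towards two boundary points is fixed by the hyperbolic
translations between them. Two groups of hyperbolic translations sharing one endpoint generate the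
horocyclic group of that endpoint, and the horocyclic groups of two boundary points generate the
identity component.
-/

section OneParameterGroups

variable {A : Type*} [NormedRing A] [NormedAlgebra ℝ A] {φ : AddChar ℝ A}

theorem conj_eq_smul_of_addChar_conj {X : A} (hX : ∀ s, HasDerivAt φ (φ s * X) s) {u : Aˣ} {c : ℝ}
    (hconj : ∀ s, u * φ s * ↑u⁻¹ = φ (c * s)) : u * X * ↑u⁻¹ = c • X := by
  have hX0 : HasDerivAt φ X 0 := by simpa [φ.map_zero_eq_one] using hX 0
  have hleft : HasDerivAt (fun s ↦ u * φ s * ↑u⁻¹) (u * X * ↑u⁻¹) 0 :=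
    (hX0.const_mul _).mul_const _
  have hright : HasDerivAt (fun s ↦ φ (c * s)) (c • X) 0 := by
    simpa [φ.map_zero_eq_one, Function.comp_def] using
      (hX (c * 0)).scomp 0 ((hasDerivAt_id (0 : ℝ)).const_mul c)
  exact hleft.unique (by simpa only [hconj] using hright)

variable [CompleteSpace A]

/-- Averaging `φ` over a short interval gives a unit, and the average is differentiable. -/
theorem exists_hasDerivAt_of_continuous_addChar (hφ : Continuous φ) :
    ∃ X : A, ∀ s, HasDerivAt φ (φ s * X) s := by
  let Φ (s : ℝ) : A := ∫ t in (0 : ℝ)..s, φ t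
  have hint (a b : ℝ) : IntervalIntegrable φ MeasureTheory.volume a b := hφ.intervalIntegrable a b
  have hΦ (s : ℝ) : HasDerivAt Φ (φ s) s := hφ.integral_hasStrictDerivAt 0 s |>.hasDerivAt
  obtain ⟨a, u, hu⟩ : ∃ a : ℝ, IsUnit (Φ a) := by
    have hslope : Tendsto (fun a : ℝ ↦ a⁻¹ • Φ a) (𝓝[≠] 0) (𝓝 1) := by
      simpa [Φ, φ.map_zero_eq_one] using (hΦ 0).tendsto_slope_zero
    have hunit := hslope.eventually (Units.isOpen.mem_nhds isUnit_one)
    obtain ⟨a, ha, ha0⟩ := (hunit.and self_mem_nhdsWithin).exists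
    exact ⟨a, (isUnit_smul_iff (Units.mk0 a ha0)⁻¹ (Φ a)).1 ha⟩
  have hshift (s : ℝ) : φ s * Φ a = Φ (s + a) - Φ s := by
    calc φ s * Φ a = ∫ t in (0 : ℝ)..a, φ s * φ t :=
          ((ContinuousLinearMap.mul ℝ A (φ s)).intervalIntegral_comp_comm (hint 0 a)).symm
      _ = ∫ t in s..s + a, φ t := by
          simp only [← φ.map_add_eq_mul, intervalIntegral.integral_comp_add_left, add_zero]
      _ = Φ (s + a) - Φ s :=
          (intervalIntegral.integral_interval_sub_left (hint _ _) (hint _ _)).symm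
  have hφ_eq (s : ℝ) : φ s = (Φ (s + a) - Φ s) * ↑u⁻¹ := by
    rw [← hshift, ← hu, Units.mul_inv_cancel_right]
  refine ⟨(φ a - 1) * ↑u⁻¹, fun s ↦ ?_⟩
  have hderiv := (((hΦ (s + a)).comp_add_const s a).sub (hΦ s)).mul_const (↑u⁻¹ : A)
  rw [show φ s * ((φ a - 1) * ↑u⁻¹) = (φ (s + a) - φ s) * ↑u⁻¹ by
    rw [φ.map_add_eq_mul]; noncomm_ring]
  exact hderiv.congr_of_eventuallyEq (.of_forall hφ_eq)

theorem addChar_eq_exp_smul {X : A} (hX : ∀ s, HasDerivAt φ (φ s * X) s) (s : ℝ) :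
    φ s = NormedSpace.exp (s • X) := by
  have hderiv (t : ℝ) : HasDerivAt (fun t ↦ φ (-t) * NormedSpace.exp (t • X)) 0 t := by
    have hφ_neg : HasDerivAt (fun t ↦ φ (-t)) (-(φ (-t) * X)) t := by
      simpa [Function.comp_def] using (hX (-t)).scomp t (hasDerivAt_neg t)
    exact (hφ_neg.mul (hasDerivAt_exp_smul_const' X t)).congr_deriv (by noncomm_ring)
  have hconst : φ (-s) * NormedSpace.exp (s • X) = 1 := by
    simpa [φ.map_zero_eq_one] using is_const_of_deriv_eq_zero
      (fun t ↦ (hderiv t).differentiableAt) (fun t ↦ (hderiv t).deriv) s 0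
  calc φ s = φ s * (φ (-s) * NormedSpace.exp (s • X)) := by rw [hconst, mul_one]
    _ = NormedSpace.exp (s • X) := by
      rw [← mul_assoc, ← φ.map_add_eq_mul, add_neg_cancel, φ.map_zero_eq_one, one_mul]

end OneParameterGroups

/-- Conjugation by `u` would otherwise have the infinitely many eigenvalues `c ^ k`. -/
theorem isNilpotent_of_conj_eq_smul {K A : Type*} [Field K] [Ring A] [Algebra K A]
    [FiniteDimensional K A] {X : A} {u : Aˣ} {c : K} (hc : Function.Injective (c ^ · : ℕ → K))
    (hconj : u * X * ↑u⁻¹ = c • X) : IsNilpotent X := by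
  by_contra hX
  have hpow (k : ℕ) : u * X ^ k * ↑u⁻¹ = c ^ k • X ^ k := by
    rw [← Units.conj_pow, hconj, smul_pow]
  let conj : Module.End K A := LinearMap.mulLeftRight K (↑u, ↑u⁻¹)
  have heigen (k : ℕ) : conj.HasEigenvalue (c ^ k) :=
    Module.End.hasEigenvalue_of_hasEigenvector
      ⟨Module.End.mem_eigenspace_iff.2 (hpow k), fun h ↦ hX ⟨k, h⟩⟩
  exact (Set.infinite_range_of_injective hc)
    (conj.finite_hasEigenvalue.subset (Set.range_subset_iff.2 heigen))

/-- The algebra of exponential sums `t ↦ ∑ r, exp (r t) • a r` with finitely many real frequencies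
`r` and coefficients `a r` in the algebra `A`. -/
def exponentialSums (A : Type*) [Ring A] [Algebra ℝ A] : Subalgebra ℝ (ℝ → A) :=
  (Submodule.span ℝ (Set.range fun (p : ℝ × A) (t : ℝ) ↦ Real.exp (p.1 * t) • p.2)).toSubalgebra
    (Submodule.subset_span ⟨(0, 1), by ext; simp⟩) fun f g hf hg ↦ by
      refine (Submodule.span_mul_span ℝ _ _).le.trans (Submodule.span_mono ?_)
        (Submodule.mul_mem_mul hf hg)
      rintro _ ⟨_, ⟨⟨r, a⟩, rfl⟩, _, ⟨⟨s, b⟩, rfl⟩, rfl⟩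
      refine ⟨(r + s, a * b), funext fun t ↦ ?_⟩
      simp only [add_mul, Real.exp_add, Pi.mul_apply, smul_mul_smul_comm]

section ExponentialSums

variable {A : Type*} [Ring A] [Algebra ℝ A]

theorem exp_smul_mem_exponentialSums (r : ℝ) (a : A) :
    (fun t ↦ Real.exp (r * t) • a) ∈ exponentialSums A :=
  Submodule.subset_span ⟨(r, a), rfl⟩

theorem const_mem_exponentialSums (a : A) : (fun _ ↦ a) ∈ exponentialSums A := by
  simpa using exp_smul_mem_exponentialSums 0 a

theorem exp_comp_mem_exponentialSums {A : Type*} [NormedRing A] [NormedAlgebra ℝ A]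
    [CompleteSpace A] {F : ℝ → A} (hF : F ∈ exponentialSums A) {d : ℕ} (hd : ∀ t, F t ^ d = 0) :
    (fun t ↦ NormedSpace.exp (F t)) ∈ exponentialSums A := by
  have hexp : (fun t ↦ NormedSpace.exp (F t)) =
      ∑ k ∈ Finset.range d, (k.factorial : ℝ)⁻¹ • F ^ k := by
    ext t
    rw [NormedSpace.exp_eq_tsum ℝ, Finset.sum_apply]
    refine tsum_eq_sum fun k hk ↦ ?_
    rw [pow_eq_zero_of_le (by simpa using hk) (hd t), smul_zero]
  rw [hexp]
  exact sum_mem fun k _ ↦ Subalgebra.smul_mem _ (pow_mem hF k) _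

theorem exists_eq_sum_exp_smul {f : ℝ → A} (hf : f ∈ exponentialSums A) :
    ∃ (S : Finset ℝ) (a : ℝ → A), ∀ t, f t = ∑ r ∈ S, Real.exp (r * t) • a r := by
  classical
  induction hf using Submodule.span_induction with
  | mem f hf =>
    obtain ⟨⟨r, a⟩, rfl⟩ := hf
    exact ⟨{r}, fun _ ↦ a, fun t ↦ by simp⟩
  | zero => exact ⟨∅, 0, fun t ↦ by simp⟩
  | add f g _ _ hf hg =>
    obtain ⟨S, a, hf⟩ := hf
    obtain ⟨T, b, hg⟩ := hg
    refine ⟨S ∪ T, fun r ↦ (if r ∈ S then a r else 0) + if r ∈ T then b r else 0, fun t ↦ ?_⟩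
    simp [hf, hg, smul_add, Finset.sum_add_distrib, smul_ite]
  | smul c f _ hf =>
    obtain ⟨S, a, hf⟩ := hf
    exact ⟨S, fun r ↦ c • a r, fun t ↦ by simp [hf, Finset.smul_sum, smul_comm c]⟩

theorem smul_const_mem_exponentialSums {f : ℝ → ℝ} (hf : f ∈ exponentialSums ℝ) (a : A) :
    (fun t ↦ f t • a) ∈ exponentialSums A := by
  obtain ⟨S, c, hf⟩ := exists_eq_sum_exp_smul hf
  have hsum : (fun t ↦ f t • a) = ∑ r ∈ S, fun t ↦ Real.exp (r * t) • c r • a := by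
    ext t
    simp [hf, Finset.sum_smul, mul_smul]
  exact hsum ▸ sum_mem fun r _ ↦ exp_smul_mem_exponentialSums r (c r • a)

theorem linearIndependent_exp_mul :
    LinearIndependent ℝ fun r t : ℝ ↦ Real.exp (r * t) := by
  let χ (r : ℝ) : Multiplicative ℝ →* ℝ :=
    { toFun t := Real.exp (r * t.toAdd)
      map_one' := by simp
      map_mul' s t := by simp [mul_add, Real.exp_add] }
  have hχ : Function.Injective χ := fun r s h ↦ by
    simpa [χ] using DFunLike.congr_fun h (Multiplicative.ofAdd 1)
  exact (linearIndependent_monoidHom (Multiplicative ℝ) ℝ).comp χ hχ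

theorem eq_zero_of_sum_exp_smul_eq_zero {E : Type*} [AddCommGroup E] [Module ℝ E] {S : Finset ℝ}
    {a : ℝ → E} (h : ∀ t : ℝ, ∑ r ∈ S, Real.exp (r * t) • a r = 0) : ∀ r ∈ S, a r = 0 := by
  intro r hr
  refine (Module.forall_dual_apply_eq_zero_iff ℝ (a r)).1 fun ℓ ↦ ?_
  refine linearIndependent_iff'.1 linearIndependent_exp_mul S (fun r ↦ ℓ (a r)) ?_ r hr
  ext t
  simpa [mul_comm] using congrArg ℓ (h t)

theorem exists_weight_decomposition {φ : AddChar ℝ A} (hφ : ⇑φ ∈ exponentialSums A) :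
    ∃ (S : Finset ℝ) (P : ℝ → A), (∀ t, φ t = ∑ r ∈ S, Real.exp (r * t) • P r) ∧
      ∀ r ∈ S, ∀ t, P r * φ t = Real.exp (r * t) • P r := by
  obtain ⟨S, P, hP⟩ := exists_eq_sum_exp_smul hφ
  refine ⟨S, P, hP, fun r hr s ↦ sub_eq_zero.1 ?_⟩
  refine eq_zero_of_sum_exp_smul_eq_zero (a := fun r ↦ P r * φ s - Real.exp (r * s) • P r)
    (fun t ↦ ?_) r hr
  have hadd : (∑ r ∈ S, Real.exp (r * t) • P r) * φ s =
      ∑ r ∈ S, Real.exp (r * (t + s)) • P r := by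
    rw [← hP, ← hP, φ.map_add_eq_mul]
  simpa [smul_sub, sub_eq_zero, Finset.sum_mul, mul_add, Real.exp_add, mul_smul] using hadd

end ExponentialSums

/-- The orbit of `v` under `φ` is bounded along some sequence of times tending to `l`, up to a
perturbation of `v` that tends to zero. -/
def IsAlmostBounded {V : Type*} [NormedAddCommGroup V] [NormedSpace ℝ V]
    (φ : AddChar ℝ (V →L[ℝ] V)) (l : Filter ℝ) (v : V) : Prop :=
  ∃ (t : ℕ → ℝ) (w : ℕ → V), Tendsto t atTop l ∧ Tendsto w atTop (𝓝 v) ∧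
    IsBounded (Set.range fun k ↦ φ (t k) (w k))

section AlmostBounded

variable {V : Type*} [NormedAddCommGroup V] [NormedSpace ℝ V] {φ : AddChar ℝ (V →L[ℝ] V)}
  {l : Filter ℝ} {v : V}

theorem IsAlmostBounded.eq_zero_of_weight (h : IsAlmostBounded φ l v) {P : V →L[ℝ] V} {r : ℝ}
    (hP : ∀ t, P * φ t = Real.exp (r * t) • P) (hr : Tendsto (r * ·) l atTop) : P v = 0 := by
  obtain ⟨t, w, ht, hw, hbdd⟩ := h
  have hPw (k : ℕ) : P (w k) = Real.exp (-(r * t k)) • P (φ (t k) (w k)) := by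
    have := DFunLike.congr_fun (hP (t k)) (w k)
    rw [mul_apply_eq_comp, _root_.smul_apply] at this
    rw [this, smul_smul, ← Real.exp_add, neg_add_cancel, Real.exp_zero, one_smul]
  have hexp : Tendsto (fun k ↦ Real.exp (-(r * t k))) atTop (𝓝 0) :=
    Real.tendsto_exp_neg_atTop_nhds_zero.comp (hr.comp ht)
  obtain ⟨C, hC⟩ := (P.lipschitz.isBounded_image hbdd).exists_norm_le
  have hbound : IsBoundedUnder (· ≤ ·) atTop fun k ↦ ‖P (φ (t k) (w k))‖ :=
    isBoundedUnder_of ⟨C, fun k ↦ hC _ (Set.mem_image_of_mem P ⟨k, rfl⟩)⟩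
  have hlim : Tendsto (fun k ↦ P (w k)) atTop (𝓝 0) :=
    (hexp.zero_smul_isBoundedUnder_le hbound).congr fun k ↦ (hPw k).symm
  exact tendsto_nhds_unique ((P.continuous.tendsto v).comp hw) hlim

/-- Boundedness in the future kills the positive weights of `v`, boundedness in the past the
negative ones. -/
theorem IsAlmostBounded.apply_eq_self (hφ : ⇑φ ∈ exponentialSums (V →L[ℝ] V))
    (hpos : IsAlmostBounded φ atTop v) (hneg : IsAlmostBounded φ atBot v) (s : ℝ) :
    φ s v = v := by
  obtain ⟨S, P, hsum, hweight⟩ := exists_weight_decomposition hφ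
  have hP (r : ℝ) (hr : r ∈ S) (hr0 : r ≠ 0) : P r v = 0 := by
    rcases hr0.lt_or_gt with hr0 | hr0
    · exact hneg.eq_zero_of_weight (hweight r hr) (tendsto_id.const_mul_atBot_of_neg hr0)
    · exact hpos.eq_zero_of_weight (hweight r hr) (tendsto_id.const_mul_atTop hr0)
  have hconst : φ s v = φ 0 v := by
    simp only [hsum, _root_.sum_apply, _root_.smul_apply]
    refine Finset.sum_congr rfl fun r hr ↦ ?_
    obtain rfl | hr0 := eq_or_ne r 0
    · simp
    · simp [hP r hr hr0]
  simpa [φ.map_zero_eq_one] using hconst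

end AlmostBounded

/-- The inclusion of `O(1,n)` into the square matrices of size `n + 1`. -/
def LorentzGrp.toMatrix {n : ℕ} : LorentzGrp n →* Matrix (Fin (n + 1)) (Fin (n + 1)) ℝ :=
  (Units.coeHom _).comp (LorentzGrp n).subtype

section LorentzAction

variable {n : ℕ}

theorem LorentzGrp.continuous_toMatrix : Continuous (toMatrix (n := n)) :=
  Units.continuous_val.comp continuous_subtype_val

theorem lorAct_mul (g h : LorentzGrp n) (x : Fin (n + 1) → ℝ) :
    lorAct (g * h) x = lorAct g (lorAct h x) :=
  (Matrix.mulVec_mulVec _ _ _).symm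

theorem lorAct_one (x : Fin (n + 1) → ℝ) : lorAct (1 : LorentzGrp n) x = x :=
  Matrix.one_mulVec x

theorem lorAct_inv_lorAct (g : LorentzGrp n) (x : Fin (n + 1) → ℝ) :
    lorAct g⁻¹ (lorAct g x) = x := by
  rw [← lorAct_mul, inv_mul_cancel, lorAct_one]

theorem lorAct_injective (g : LorentzGrp n) : Function.Injective (lorAct g) :=
  Function.LeftInverse.injective (lorAct_inv_lorAct g)

theorem lorAct_add (g : LorentzGrp n) (x y : Fin (n + 1) → ℝ) :
    lorAct g (x + y) = lorAct g x + lorAct g y :=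
  Matrix.mulVec_add _ x y

theorem lorAct_smul (g : LorentzGrp n) (c : ℝ) (x : Fin (n + 1) → ℝ) :
    lorAct g (c • x) = c • lorAct g x :=
  Matrix.mulVec_smul _ c x

@[fun_prop]
theorem continuous_lorAct {X : Type*} [TopologicalSpace X] {g : X → LorentzGrp n}
    {x : X → Fin (n + 1) → ℝ} (hg : Continuous g) (hx : Continuous x) :
    Continuous fun a ↦ lorAct (g a) (x a) :=
  (LorentzGrp.continuous_toMatrix.comp hg).matrix_mulVec hx

theorem lorAct_ext {g h : LorentzGrp n} (H : ∀ x, lorAct g x = lorAct h x) : g = h :=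
  Subtype.ext (Units.ext (Matrix.ext_of_mulVec_single fun i ↦ H (Pi.single i 1)))

theorem lorQ_lorAct (g : LorentzGrp n) (x : Fin (n + 1) → ℝ) : lorQ n (lorAct g x) = lorQ n x :=
  g.2 x

theorem lorQ_smul (c : ℝ) (x : Fin (n + 1) → ℝ) : lorQ n (c • x) = c ^ 2 * lorQ n x := by
  simp only [lorQ, ← Finset.sum_filter, Pi.smul_apply, smul_eq_mul, mul_pow, mul_add,
    Finset.mul_sum]
  ring

theorem lorQ_add (x y : Fin (n + 1) → ℝ) :
    lorQ n (x + y) = lorQ n x + 2 * lorB n x y + lorQ n y := by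
  have hsum : (∑ i, if i ≠ 0 ∧ i ≠ Fin.last n then (x i + y i) ^ 2 else 0) =
      (∑ i, if i ≠ 0 ∧ i ≠ Fin.last n then x i ^ 2 else 0) +
        2 * (∑ i, if i ≠ 0 ∧ i ≠ Fin.last n then x i * y i else 0) +
        ∑ i, if i ≠ 0 ∧ i ≠ Fin.last n then y i ^ 2 else 0 := by
    rw [Finset.mul_sum, ← Finset.sum_add_distrib, ← Finset.sum_add_distrib]
    refine Finset.sum_congr rfl fun i _ ↦ ?_
    split_ifs <;> ring
  simp only [lorQ, lorB, Pi.add_apply, hsum]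
  ring

theorem lorB_lorAct (g : LorentzGrp n) (x y : Fin (n + 1) → ℝ) :
    lorB n (lorAct g x) (lorAct g y) = lorB n x y := by
  have h := lorQ_lorAct g (x + y)
  rw [lorAct_add, lorQ_add, lorQ_add, lorQ_lorAct, lorQ_lorAct] at h
  linarith

theorem continuous_lorQ : Continuous (lorQ n) := by
  unfold lorQ
  refine .add (by fun_prop) (continuous_finsetSum _ fun i _ ↦ ?_)
  split_ifs <;> fun_prop

theorem isClosed_lorentzGrp : IsClosed (LorentzGrp n : Set (GL (Fin (n + 1)) ℝ)) := by
  have hcont (x : Fin (n + 1) → ℝ) :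
      Continuous fun g : GL (Fin (n + 1)) ℝ ↦ lorQ n (g.1 *ᵥ x) :=
    continuous_lorQ.comp (Units.continuous_val.matrix_mulVec continuous_const)
  change IsClosed {g : GL (Fin (n + 1)) ℝ | ∀ x, lorQ n (g.1 *ᵥ x) = lorQ n x}
  rw [Set.ofPred_forall]
  exact isClosed_iInter fun x ↦ isClosed_eq (hcont x) continuous_const

/-- `O(1,n)` sits as a closed subset of pairs of matrices through `g ↦ (g, g⁻¹)`. -/
theorem isCompact_of_abs_toMatrix_le {K : Set (LorentzGrp n)} (hK : IsClosed K) {C : ℝ}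
    (hC : ∀ g ∈ K, ∀ i j, |LorentzGrp.toMatrix g i j| ≤ C) (hinv : ∀ g ∈ K, g⁻¹ ∈ K) :
    IsCompact K := by
  let B : Set (Matrix (Fin (n + 1)) (Fin (n + 1)) ℝ) :=
    Set.univ.pi fun _ ↦ Set.univ.pi fun _ ↦ Set.Icc (-C) C
  have hB : IsCompact B := isCompact_univ_pi fun _ ↦ isCompact_univ_pi fun _ ↦ isCompact_Icc
  have hmem {g : LorentzGrp n} (hg : g ∈ K) : LorentzGrp.toMatrix g ∈ B :=
    fun i _ j _ ↦ abs_le.1 (hC g hg i j)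
  have hemb := Units.isClosedEmbedding_embedProduct.comp
    (isClosed_lorentzGrp (n := n)).isClosedEmbedding_subtypeVal
  exact (hemb.isCompact_preimage (hB.prod (hB.image MulOpposite.continuous_op))).of_isClosed_subset
    hK fun g hg ↦ ⟨hmem hg, _, hmem (hinv g hg), rfl⟩

theorem lorB_neg_right (x y : Fin (n + 1) → ℝ) : lorB n x (-y) = -lorB n x y := by
  simp only [lorB, ← Finset.sum_filter, Pi.neg_apply, mul_neg, Finset.sum_neg_distrib]
  ring

theorem sum_sq_eq_lorQ_add_lorB_sq (hn : n ≠ 0) (x : Fin (n + 1) → ℝ) :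
    ∑ i, x i ^ 2 = lorQ n x + lorB n x (basePt n) ^ 2 := by
  obtain ⟨m, rfl⟩ := Nat.exists_eq_succ_of_ne_zero hn
  simp [lorQ, lorB, basePt, Fin.sum_univ_succ (n := m + 1), Fin.sum_univ_castSucc (n := m)]
  ring

/-- The maximal compact subgroup of `O(1,n)`: the elements that preserve, besides `lorQ`, the
Euclidean norm. -/
def maximalCompact (n : ℕ) : Set (LorentzGrp n) :=
  {g | ∀ x, ∑ i, lorAct g x i ^ 2 = ∑ i, x i ^ 2}

theorem mem_maximalCompact_of_lorAct_basePt (hn : n ≠ 0) {g : LorentzGrp n}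
    (hg : lorAct g (basePt n) = basePt n ∨ lorAct g (basePt n) = -basePt n) :
    g ∈ maximalCompact n := fun x ↦ by
  have hB : lorB n (lorAct g x) (basePt n) ^ 2 = lorB n x (basePt n) ^ 2 := by
    rw [← lorB_lorAct g x]
    rcases hg with hg | hg
    · rw [hg]
    · rw [hg, lorB_neg_right, neg_sq]
  rw [sum_sq_eq_lorQ_add_lorB_sq hn, sum_sq_eq_lorQ_add_lorB_sq hn, lorQ_lorAct, hB]

theorem isCompact_maximalCompact : IsCompact (maximalCompact n) := by
  have hcont (x : Fin (n + 1) → ℝ) : Continuous fun g : LorentzGrp n ↦ ∑ i, lorAct g x i ^ 2 := by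
      fun_prop
  refine isCompact_of_abs_toMatrix_le (C := 1) ?_ (fun g hg i j ↦ ?_) (fun g hg x ↦ ?_)
  · rw [maximalCompact, Set.ofPred_forall]
    exact isClosed_iInter fun x ↦ isClosed_eq (hcont x) continuous_const
  · have hcol (i : Fin (n + 1)) : lorAct g (Pi.single j 1) i = LorentzGrp.toMatrix g i j :=
      congrFun (Matrix.mulVec_single_one _ j) i
    have hsum : ∑ i, LorentzGrp.toMatrix g i j ^ 2 = 1 := by
      simp only [← hcol, hg (Pi.single j 1)]
      simp [Pi.single_apply]
    exact sq_le_one_iff_abs_le_one _ |>.1 (hsum ▸ Finset.single_le_sum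
      (f := fun i ↦ LorentzGrp.toMatrix g i j ^ 2) (fun _ _ ↦ sq_nonneg _) (Finset.mem_univ i))
  · rw [← hg, ← lorAct_mul, mul_inv_cancel, lorAct_one]

end LorentzAction

namespace IsStableVec

variable {n : ℕ} {V : Type*} [NormedAddCommGroup V] [NormedSpace ℝ V]
  {ρ : LorentzGrp n →* (V →L[ℝ] V)} {G H K : Set (LorentzGrp n)} {v : V}

open scoped Pointwise in
theorem of_subset_compact_mul (hρ : Continuous fun g ↦ ρ g) (hK : IsCompact K)
    (h : IsStableVec ρ G v) (hH : H ⊆ K * G) : IsStableVec ρ H v := by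
  obtain ⟨C, hC⟩ := (hK.image hρ).isBounded.exists_norm_le
  obtain ⟨D, hD⟩ := IsBounded.exists_norm_le h
  refine isBounded_iff_forall_norm_le.2 ⟨C * D, ?_⟩
  rintro _ ⟨h, hh, rfl⟩
  obtain ⟨k, hk, g, hg, rfl⟩ := hH hh
  rw [map_mul]
  exact (ρ k).le_of_opNorm_le_of_le (hC _ ⟨k, hk, rfl⟩) (hD _ ⟨g, hg, rfl⟩)

theorem mul_right (h : IsStableVec ρ G v) (k : LorentzGrp n) :
    IsStableVec ρ ((· * k⁻¹) '' G) (ρ k v) := by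
  refine IsBounded.subset h ?_
  rintro _ ⟨_, ⟨g, hg, rfl⟩, rfl⟩
  refine ⟨g, hg, ?_⟩
  rw [← mul_apply_eq_comp, ← map_mul, inv_mul_cancel_right]

end IsStableVec

section OneParameterSubgroups

variable {n : ℕ}

/-- The one-parameter group of `O(1,n)` underlying a one-parameter group of matrices that preserve
`lorQ`. -/
def LorentzGrp.ofAddChar (M : AddChar ℝ (Matrix (Fin (n + 1)) (Fin (n + 1)) ℝ))
    (hM : ∀ t x, lorQ n (M t *ᵥ x) = lorQ n x) : AddChar ℝ (LorentzGrp n) where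
  toFun t := ⟨⟨M t, M (-t), by simp [← M.map_add_eq_mul, M.map_zero_eq_one],
    by simp [← M.map_add_eq_mul, M.map_zero_eq_one]⟩, hM t⟩
  map_zero_eq_one' := Subtype.ext (Units.ext M.map_zero_eq_one)
  map_add_eq_mul' s t := Subtype.ext (Units.ext (M.map_add_eq_mul s t))

theorem LorentzGrp.continuous_ofAddChar {M : AddChar ℝ (Matrix (Fin (n + 1)) (Fin (n + 1)) ℝ)}
    {hM : ∀ t x, lorQ n (M t *ᵥ x) = lorQ n x} (hcont : Continuous M) :
    Continuous (ofAddChar M hM) :=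
  .subtype_mk (Units.continuous_iff.2 ⟨by exact hcont, by exact hcont.comp continuous_neg⟩) _

end OneParameterSubgroups

theorem lorQ_two (x : Fin 3 → ℝ) : lorQ 2 x = 2 * x 0 * x 2 + x 1 ^ 2 := by
  simp only [lorQ, ← Finset.sum_filter]
  congr 1
  exact Finset.sum_singleton _ _

theorem basePt_two : basePt 2 = ![1, 0, -1] := by
  ext i
  fin_cases i <;> rfl

theorem mulVec_fin_three (a b c d e f g h i : ℝ) (x : Fin 3 → ℝ) :
    !![a, b, c; d, e, f; g, h, i] *ᵥ x =
      ![a * x 0 + b * x 1 + c * x 2, d * x 0 + e * x 1 + f * x 2, g * x 0 + h * x 1 + i * x 2] := by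
  ext j
  fin_cases j <;> simp [Matrix.mulVec, dotProduct, Fin.sum_univ_three]

/-- The matrices `diag (eᵗ, 1, e⁻ᵗ)` of the one-parameter group `boost`. -/
def boostMatrix : AddChar ℝ (Matrix (Fin 3) (Fin 3) ℝ) where
  toFun t := !![Real.exp t, 0, 0; 0, 1, 0; 0, 0, Real.exp (-t)]
  map_zero_eq_one' := by simp [Matrix.one_fin_three]
  map_add_eq_mul' s t := by simp [Real.exp_add, mul_comm]

theorem boostMatrix_mulVec (t : ℝ) (x : Fin 3 → ℝ) :
    boostMatrix t *ᵥ x = ![Real.exp t * x 0, x 1, Real.exp (-t) * x 2] := by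
  refine (mulVec_fin_three _ _ _ _ _ _ _ _ _ x).trans ?_
  simp only [zero_mul, one_mul, add_zero, zero_add]

theorem lorQ_boostMatrix_mulVec (t : ℝ) (x : Fin 3 → ℝ) :
    lorQ 2 (boostMatrix t *ᵥ x) = lorQ 2 x := by
  rw [boostMatrix_mulVec, lorQ_two, lorQ_two, Real.exp_neg]
  simp only [Matrix.cons_val]
  field

/-- The one-parameter group of hyperbolic translations of `O(1,2)` with eigenvectors `e₁`, `e₃`. -/
def boost : AddChar ℝ (LorentzGrp 2) :=
  LorentzGrp.ofAddChar (n := 2) boostMatrix lorQ_boostMatrix_mulVec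

/-- The matrices of the one-parameter group `upperUnip`. -/
def upperUnipMatrix : AddChar ℝ (Matrix (Fin 3) (Fin 3) ℝ) where
  toFun s := !![1, -s, -s ^ 2 / 2; 0, 1, s; 0, 0, 1]
  map_zero_eq_one' := by simp [Matrix.one_fin_three]
  map_add_eq_mul' s t := by
    ext i j
    fin_cases i <;> fin_cases j <;> simp <;> ring

theorem upperUnipMatrix_mulVec (s : ℝ) (x : Fin 3 → ℝ) :
    upperUnipMatrix s *ᵥ x = ![x 0 - s * x 1 - s ^ 2 / 2 * x 2, x 1 + s * x 2, x 2] := by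
  refine (mulVec_fin_three _ _ _ _ _ _ _ _ _ x).trans ?_
  ring_nf

theorem lorQ_upperUnipMatrix_mulVec (s : ℝ) (x : Fin 3 → ℝ) :
    lorQ 2 (upperUnipMatrix s *ᵥ x) = lorQ 2 x := by
  rw [upperUnipMatrix_mulVec, lorQ_two, lorQ_two]
  simp only [Matrix.cons_val]
  ring

/-- The horocyclic one-parameter group of `O(1,2)` fixing `e₁`. -/
def upperUnip : AddChar ℝ (LorentzGrp 2) :=
  LorentzGrp.ofAddChar (n := 2) upperUnipMatrix lorQ_upperUnipMatrix_mulVec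

/-- The matrix of the reflection `weyl`. -/
def weylMatrix : Matrix (Fin 3) (Fin 3) ℝ := !![0, 0, 1; 0, 1, 0; 1, 0, 0]

theorem weylMatrix_mul_self : weylMatrix * weylMatrix = 1 := by
  simp [weylMatrix, Matrix.one_fin_three]

theorem weylMatrix_mulVec (x : Fin 3 → ℝ) : weylMatrix *ᵥ x = ![x 2, x 1, x 0] := by
  refine (mulVec_fin_three _ _ _ _ _ _ _ _ _ x).trans ?_
  simp only [zero_mul, one_mul, add_zero, zero_add]

theorem lorQ_weylMatrix_mulVec (x : Fin 3 → ℝ) : lorQ 2 (weylMatrix *ᵥ x) = lorQ 2 x := by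
  rw [weylMatrix_mulVec, lorQ_two, lorQ_two]
  simp only [Matrix.cons_val]
  ring

/-- The reflection of `O(1,2)` exchanging `e₁` and `e₃`. -/
def weyl : LorentzGrp 2 :=
  ⟨⟨weylMatrix, weylMatrix, weylMatrix_mul_self, weylMatrix_mul_self⟩, lorQ_weylMatrix_mulVec⟩

/-- The horocyclic one-parameter group of `O(1,2)` fixing `e₃`. -/
def lowerUnip : AddChar ℝ (LorentzGrp 2) :=
  (MulAut.conj weyl).toMonoidHom.compAddChar upperUnip

section Formulas

variable (s t : ℝ) (x : Fin 3 → ℝ)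

theorem lorAct_boost : lorAct (boost t) x = ![Real.exp t * x 0, x 1, Real.exp (-t) * x 2] :=
  boostMatrix_mulVec t x

theorem lorAct_upperUnip :
    lorAct (upperUnip s) x = ![x 0 - s * x 1 - s ^ 2 / 2 * x 2, x 1 + s * x 2, x 2] :=
  upperUnipMatrix_mulVec s x

theorem lorAct_weyl : lorAct weyl x = ![x 2, x 1, x 0] :=
  weylMatrix_mulVec x

theorem weyl_mul_self : weyl * weyl = 1 :=
  Subtype.ext (Units.ext weylMatrix_mul_self)

theorem weyl_inv : weyl⁻¹ = weyl :=
  inv_eq_of_mul_eq_one_right weyl_mul_self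

theorem lowerUnip_eq : lowerUnip s = weyl * upperUnip s * weyl := by
  conv_rhs => rw [← weyl_inv]
  rfl

theorem lorAct_lowerUnip :
    lorAct (lowerUnip s) x = ![x 0, x 1 + s * x 0, x 2 - s * x 1 - s ^ 2 / 2 * x 0] := by
  simp [lowerUnip_eq, lorAct_mul, lorAct_weyl, lorAct_upperUnip]

theorem boost_mul_upperUnip_mul_boost_neg :
    boost t * upperUnip s * boost (-t) = upperUnip (Real.exp t * s) := by
  refine lorAct_ext fun x ↦ ?_
  simp only [lorAct_mul, lorAct_boost, lorAct_upperUnip]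
  ext i
  fin_cases i <;> simp [Real.exp_neg] <;> field

theorem weyl_mul_boost_mul_weyl : weyl * boost t * weyl = boost (-t) := by
  refine lorAct_ext fun x ↦ ?_
  simp [lorAct_mul, lorAct_boost, lorAct_weyl]

theorem boost_two_mul : boost (2 * t) =
    lowerUnip (2 * Real.exp (-t)) * upperUnip (Real.exp t - 1) * lowerUnip (-2) *
      upperUnip (Real.exp (-t) - 1) := by
  refine lorAct_ext fun x ↦ ?_
  simp only [lorAct_mul, lorAct_boost, lorAct_upperUnip, lorAct_lowerUnip]
  have hsq : Real.exp (2 * t) = Real.exp t ^ 2 := by rw [two_mul, Real.exp_add, sq]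
  have := Real.exp_pos t
  ext i
  fin_cases i <;> simp [Real.exp_neg, hsq] <;> field

theorem continuous_upperUnip : Continuous upperUnip :=
  LorentzGrp.continuous_ofAddChar <| by
    change Continuous fun s : ℝ ↦ (!![1, -s, -s ^ 2 / 2; 0, 1, s; 0, 0, 1] : Matrix _ _ ℝ)
    fun_prop

theorem continuous_lowerUnip : Continuous lowerUnip := by
  have := continuous_upperUnip
  simp only [funext lowerUnip_eq]
  fun_prop

end Formulas

section Representation

variable {V : Type*} [NormedAddCommGroup V] [NormedSpace ℝ V] [FiniteDimensional ℝ V]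
  {ρ : LorentzGrp 2 →* (V →L[ℝ] V)}

theorem exists_isNilpotent_upperUnip_eq_exp (hρ : Continuous fun g ↦ ρ g) :
    ∃ X : V →L[ℝ] V, IsNilpotent X ∧ ∀ s, ρ (upperUnip s) = NormedSpace.exp (s • X) := by
  have : CompleteSpace V := FiniteDimensional.complete ℝ V
  let φ : AddChar ℝ (V →L[ℝ] V) := ρ.compAddChar upperUnip
  obtain ⟨X, hX⟩ := exists_hasDerivAt_of_continuous_addChar (φ := φ) (hρ.comp continuous_upperUnip)
  have hconj (s : ℝ) : ρ.toHomUnits (boost 1) * φ s * ↑(ρ.toHomUnits (boost 1))⁻¹ =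
      φ (Real.exp 1 * s) := by
    change _ = ρ (upperUnip _)
    rw [← map_inv, ← boost.map_neg_eq_inv, ← boost_mul_upperUnip_mul_boost_neg, map_mul, map_mul]
    rfl
  have hexp : Function.Injective (Real.exp 1 ^ · : ℕ → ℝ) :=
    pow_right_injective₀ (Real.exp_pos 1) (Real.one_lt_exp_iff.2 one_pos).ne'
  exact ⟨X, isNilpotent_of_conj_eq_smul hexp (conj_eq_smul_of_addChar_conj hX hconj),
    addChar_eq_exp_smul hX⟩

theorem upperUnip_comp_mem_exponentialSums (hρ : Continuous fun g ↦ ρ g) {f : ℝ → ℝ}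
    (hf : f ∈ exponentialSums ℝ) : (fun t ↦ ρ (upperUnip (f t))) ∈ exponentialSums (V →L[ℝ] V) := by
  have : CompleteSpace V := FiniteDimensional.complete ℝ V
  obtain ⟨X, ⟨d, hd⟩, hX⟩ := exists_isNilpotent_upperUnip_eq_exp hρ
  simp only [hX]
  exact exp_comp_mem_exponentialSums (smul_const_mem_exponentialSums hf X) (d := d) fun t ↦ by
    rw [smul_pow, hd, smul_zero]

theorem lowerUnip_comp_mem_exponentialSums (hρ : Continuous fun g ↦ ρ g) {f : ℝ → ℝ}
    (hf : f ∈ exponentialSums ℝ) : (fun t ↦ ρ (lowerUnip (f t))) ∈ exponentialSums (V →L[ℝ] V) := by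
  simp only [lowerUnip_eq, map_mul]
  exact mul_mem (mul_mem (const_mem_exponentialSums _) (upperUnip_comp_mem_exponentialSums hρ hf))
    (const_mem_exponentialSums _)

/-- The unipotent one-parameter groups act polynomially, and `boost t` is a product of unipotents
with parameters polynomial in `exp (± t / 2)`. -/
theorem boost_mem_exponentialSums (hρ : Continuous fun g ↦ ρ g) :
    ⇑(ρ.compAddChar boost) ∈ exponentialSums (V →L[ℝ] V) := by
  have hexp (r : ℝ) : (fun t ↦ Real.exp (r * t)) ∈ exponentialSums ℝ := by
    simpa using exp_smul_mem_exponentialSums r (1 : ℝ)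
  have hfactor : ⇑(ρ.compAddChar boost) = fun t ↦ ρ (lowerUnip (2 * Real.exp (-(1 / 2) * t))) *
      ρ (upperUnip (Real.exp (1 / 2 * t) - 1)) * ρ (lowerUnip (-2)) *
      ρ (upperUnip (Real.exp (-(1 / 2) * t) - 1)) := by
    ext1 t
    rw [← map_mul, ← map_mul, ← map_mul, neg_mul, ← boost_two_mul, ← mul_assoc, mul_one_div_cancel
      two_ne_zero, one_mul]
    rfl
  rw [hfactor]
  refine mul_mem (mul_mem (mul_mem ?_ ?_) (const_mem_exponentialSums _)) ?_
  · exact lowerUnip_comp_mem_exponentialSums hρ (mul_mem (const_mem_exponentialSums 2) (hexp _))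
  · exact upperUnip_comp_mem_exponentialSums hρ (sub_mem (hexp _) (one_mem _))
  · exact upperUnip_comp_mem_exponentialSums hρ (sub_mem (hexp _) (one_mem _))

end Representation

section NullVectors

theorem lorB_two (x y : Fin 3 → ℝ) : lorB 2 x y = x 0 * y 2 + x 2 * y 0 + x 1 * y 1 := by
  simp only [lorB, ← Finset.sum_filter]
  congr 1
  exact Finset.sum_singleton _ _

variable {y : Fin 3 → ℝ}

theorem eq_smul_of_lorQ_eq_zero_of_apply_two_eq_zero (hy : lorQ 2 y = 0) (h2 : y 2 = 0) :
    y = y 0 • ![1, 0, 0] := by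
  have h1 : y 1 = 0 := by simpa [lorQ_two, h2] using hy
  ext i
  fin_cases i <;> simp [h1, h2]

theorem eq_smul_of_lorQ_eq_zero_of_apply_zero_eq_zero (hy : lorQ 2 y = 0) (h0 : y 0 = 0) :
    y = y 2 • ![0, 0, 1] := by
  have h1 : y 1 = 0 := by simpa [lorQ_two, h0] using hy
  ext i
  fin_cases i <;> simp [h0, h1]

theorem lorAct_upperUnip_neg_div_of_lorQ_eq_zero (hy : lorQ 2 y = 0) (h2 : y 2 ≠ 0) :
    lorAct (upperUnip (-(y 1 / y 2))) y = y 2 • ![0, 0, 1] := by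
  rw [lorQ_two] at hy
  rw [lorAct_upperUnip]
  ext i
  fin_cases i <;> simp <;> field_simp <;> linarith

theorem lorAct_lowerUnip_neg_div_of_lorQ_eq_zero (hy : lorQ 2 y = 0) (h0 : y 0 ≠ 0) :
    lorAct (lowerUnip (-(y 1 / y 0))) y = y 0 • ![1, 0, 0] := by
  rw [lorQ_two] at hy
  rw [lorAct_lowerUnip]
  ext i
  fin_cases i <;> simp <;> field_simp <;> linarith

theorem exists_lorAct_eq_smul_of_lorQ_eq_zero (hy : lorQ 2 y = 0) (hy0 : y ≠ 0) :
    ∃ (h : LorentzGrp 2) (c : ℝ), c ≠ 0 ∧ lorAct h y = c • ![0, 0, 1] := by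
  by_cases h2 : y 2 = 0
  · have hy1 := eq_smul_of_lorQ_eq_zero_of_apply_two_eq_zero hy h2
    refine ⟨weyl, y 0, fun h0 ↦ hy0 (by rw [hy1, h0, zero_smul]), ?_⟩
    rw [congrArg (lorAct weyl) hy1, lorAct_smul, lorAct_weyl]
    rfl
  · exact ⟨_, y 2, h2, lorAct_upperUnip_neg_div_of_lorQ_eq_zero hy h2⟩

theorem exists_lorAct_eq_smul_and_lorAct_eq_smul {p p' : Fin 3 → ℝ} (hp : lorQ 2 p = 0)
    (hp0 : p ≠ 0) (hp' : lorQ 2 p' = 0) (hne : ∀ c : ℝ, p' ≠ c • p) :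
    ∃ (h : LorentzGrp 2) (c c' : ℝ), c ≠ 0 ∧ c' ≠ 0 ∧
      lorAct h p = c • ![0, 0, 1] ∧ lorAct h p' = c' • ![1, 0, 0] := by
  obtain ⟨h, c, hc, hpc⟩ := exists_lorAct_eq_smul_of_lorQ_eq_zero hp hp0
  have hq : lorQ 2 (lorAct h p') = 0 := (lorQ_lorAct h p').trans hp'
  have hq0 : lorAct h p' 0 ≠ 0 := fun hzero ↦ by
    have hq2 := eq_smul_of_lorQ_eq_zero_of_apply_zero_eq_zero hq hzero
    refine hne (lorAct h p' 2 / c) (lorAct_injective h ?_)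
    rw [lorAct_smul, hpc, smul_smul, div_mul_cancel₀ _ hc]
    exact hq2
  refine ⟨lowerUnip (-(lorAct h p' 1 / lorAct h p' 0)) * h, c, lorAct h p' 0, hc, hq0, ?_, ?_⟩
  · rw [lorAct_mul, hpc, lorAct_smul, lorAct_lowerUnip]
    simp
  · rw [lorAct_mul, lorAct_lowerUnip_neg_div_of_lorQ_eq_zero hq hq0]

end NullVectors

section TimelikeVectors

theorem apply_zero_ne_zero_of_lorQ_eq_neg_two {y : Fin 3 → ℝ} (hy : lorQ 2 y = -2) : y 0 ≠ 0 := by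
  intro h0
  rw [lorQ_two, h0] at hy
  nlinarith [sq_nonneg (y 1)]

theorem lorAct_boost_mul_lowerUnip_of_lorQ_eq_neg_two {y : Fin 3 → ℝ} (hy : lorQ 2 y = -2) :
    lorAct (boost (-Real.log |y 0|) * lowerUnip (-(y 1 / y 0))) y = basePt 2 ∨
      lorAct (boost (-Real.log |y 0|) * lowerUnip (-(y 1 / y 0))) y = -basePt 2 := by
  have h0 := apply_zero_ne_zero_of_lorQ_eq_neg_two hy
  rw [lorQ_two] at hy
  have h2 : y 2 + y 1 / y 0 * y 1 - (y 1 / y 0) ^ 2 / 2 * y 0 = -(y 0)⁻¹ := by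
    field_simp
    linarith
  have habs : |y 0| * (y 0)⁻¹ = y 0 / |y 0| := by
    rw [← div_eq_mul_inv, div_eq_div_iff h0 (abs_ne_zero.2 h0), abs_mul_abs_self]
  have hact : lorAct (boost (-Real.log |y 0|) * lowerUnip (-(y 1 / y 0))) y =
      (y 0 / |y 0|) • basePt 2 := by
    rw [lorAct_mul, lorAct_lowerUnip, lorAct_boost, neg_neg, Real.exp_neg,
      Real.exp_log (abs_pos.2 h0), basePt_two]
    ext i
    fin_cases i
    · simp [mul_comm, div_eq_mul_inv]
    · simp [h0]
    · simpa [h2] using habs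
  rcases h0.lt_or_gt with hneg | hpos
  · right
    rw [hact, abs_of_neg hneg, div_neg, div_self h0, neg_one_smul]
  · left
    rw [hact, abs_of_pos hpos, div_self h0, one_smul]

theorem tendsto_apply_div_apply_of_tendsto_smul {α ι : Type*} {l : Filter α} {c : α → ℝ}
    {y : α → ι → ℝ} {u : ι → ℝ} (h : Tendsto (fun a ↦ c a • y a) l (𝓝 u)) (i : ι) {j : ι}
    (hj : u j ≠ 0) : Tendsto (fun a ↦ y a i / y a j) l (𝓝 (u i / u j)) := by
  have hcoord := tendsto_pi_nhds.1 h
  refine ((hcoord i).div (hcoord j) hj).congr' ?_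
  filter_upwards [(hcoord j).eventually_ne hj] with a ha
  exact mul_div_mul_left _ _ (left_ne_zero_of_mul ha)

theorem tendsto_log_abs_apply_zero_atTop {α : Type*} {l : Filter α} {y : α → Fin 3 → ℝ}
    (hy : ∀ a, lorQ 2 (y a) = -2) (h1 : Tendsto (fun a ↦ y a 1 / y a 0) l (𝓝 0))
    (h2 : Tendsto (fun a ↦ y a 2 / y a 0) l (𝓝 0)) :
    Tendsto (fun a ↦ Real.log |y a 0|) l atTop := by
  have h0 (a : α) := apply_zero_ne_zero_of_lorQ_eq_neg_two (hy a)
  have hsq (a : α) : -(y a 2 / y a 0) - (y a 1 / y a 0) ^ 2 / 2 = ((y a 0)⁻¹) ^ 2 := by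
    have hq := hy a
    have h0 := h0 a
    rw [lorQ_two] at hq
    field_simp
    linarith
  have hsq_lim : Tendsto (fun a ↦ ((y a 0)⁻¹) ^ 2) l (𝓝 0) := by
    simpa [hsq] using h2.neg.sub ((h1.pow 2).div_const 2)
  have hsq_lim_ne : Tendsto (fun a ↦ ((y a 0)⁻¹) ^ 2) l (𝓝[≠] 0) :=
    tendsto_nhdsWithin_iff.2 ⟨hsq_lim, .of_forall fun a ↦ pow_ne_zero 2 (inv_ne_zero (h0 a))⟩
  refine ((Real.tendsto_log_nhdsNE_zero.comp hsq_lim_ne).const_mul_atBot_of_neg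
    (neg_neg_of_pos (one_half_pos (α := ℝ)))).congr fun a ↦ ?_
  simp [Real.log_pow]

end TimelikeVectors

/-- The vector `v` is stable under a subset of `O(1,n)` having `u` as a limit direction. -/
def IsStableToward {n : ℕ} {V : Type*} [NormedAddCommGroup V] [NormedSpace ℝ V]
    (ρ : LorentzGrp n →* (V →L[ℝ] V)) (u : Fin (n + 1) → ℝ) (v : V) : Prop :=
  ∃ G, IsLimitDirection n G u ∧ IsStableVec ρ G v

namespace IsStableToward

variable {n : ℕ} {V : Type*} [NormedAddCommGroup V] [NormedSpace ℝ V]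

theorem ne_zero {ρ : LorentzGrp n →* (V →L[ℝ] V)} {u : Fin (n + 1) → ℝ} {v : V}
    (h : IsStableToward ρ u v) : u ≠ 0 := by
  obtain ⟨G, ⟨hu0, -⟩, -⟩ := h
  exact hu0

theorem lorQ_eq_zero {ρ : LorentzGrp n →* (V →L[ℝ] V)} {u : Fin (n + 1) → ℝ} {v : V}
    (h : IsStableToward ρ u v) : lorQ n u = 0 := by
  obtain ⟨G, ⟨-, hu, -⟩, -⟩ := h
  exact hu

theorem of_smul {ρ : LorentzGrp n →* (V →L[ℝ] V)} {u : Fin (n + 1) → ℝ} {v : V} {c : ℝ}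
    (h : IsStableToward ρ (c • u) v) : IsStableToward ρ u v := by
  obtain ⟨hc, hu0⟩ := smul_ne_zero_iff.1 h.ne_zero
  have hu : lorQ n u = 0 := by simpa [lorQ_smul, hc] using h.lorQ_eq_zero
  obtain ⟨G, ⟨-, -, g, lam, hg, hlim⟩, hst⟩ := h
  refine ⟨G, ⟨hu0, hu, g, fun k ↦ c⁻¹ * lam k, hg, ?_⟩, hst⟩
  simpa only [mul_smul, inv_smul_smul₀ hc] using hlim.const_smul c⁻¹

theorem map {ρ : LorentzGrp n →* (V →L[ℝ] V)} {u : Fin (n + 1) → ℝ} {v : V}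
    (h : IsStableToward ρ u v) (k : LorentzGrp n) : IsStableToward ρ (lorAct k u) (ρ k v) := by
  obtain ⟨G, ⟨hu0, hu, g, lam, hg, hlim⟩, hst⟩ := h
  refine ⟨_, ⟨fun h0 ↦ hu0 (lorAct_injective k ?_), (lorQ_lorAct k u).trans hu, fun i ↦ g i * k⁻¹,
    lam, fun i ↦ Set.mem_image_of_mem _ (hg i), ?_⟩, hst.mul_right k⟩
  · simpa [h0] using (lorAct_smul k 0 u).symm
  · have hcont : Continuous (lorAct k) := continuous_lorAct continuous_const continuous_id
    simpa [Function.comp_def, lorAct_smul, lorAct_mul] using (hcont.tendsto u).comp hlim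

variable {ρ : LorentzGrp 2 →* (V →L[ℝ] V)} {v : V}

/-- By the Iwasawa decomposition `O(1,2) = K A N`, a sequence witnessing the limit direction is
`boost (t k) * lowerUnip (s k)` up to compact factors; the limit forces `t k → -∞`, `s k → 0`. -/
theorem isAlmostBounded_atBot (hρ : Continuous fun g ↦ ρ g)
    (h : IsStableToward ρ ![1, 0, 0] v) : IsAlmostBounded (ρ.compAddChar boost) atBot v := by
  obtain ⟨G, ⟨-, -, g, lam, hg, hlim⟩, hst⟩ := h
  let y (k : ℕ) : Fin 3 → ℝ := lorAct (g k)⁻¹ (basePt 2)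
  have hy (k : ℕ) : lorQ 2 (y k) = -2 := by
    rw [lorQ_lorAct, lorQ_two, basePt_two]
    simp
  have hdiv (i : Fin 3) := tendsto_apply_div_apply_of_tendsto_smul hlim i (j := 0) (by simp)
  have h1 : Tendsto (fun k ↦ y k 1 / y k 0) atTop (𝓝 0) := by simpa using hdiv 1
  have h2 : Tendsto (fun k ↦ y k 2 / y k 0) atTop (𝓝 0) := by simpa using hdiv 2
  let s (k : ℕ) : ℝ := -(y k 1 / y k 0)
  let t (k : ℕ) : ℝ := -Real.log |y k 0|
  have hcoset (k : ℕ) : boost (t k) * lowerUnip (s k) * (g k)⁻¹ ∈ maximalCompact 2 := by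
    refine mem_maximalCompact_of_lorAct_basePt two_ne_zero ?_
    rw [lorAct_mul]
    exact lorAct_boost_mul_lowerUnip_of_lorQ_eq_neg_two (hy k)
  have hbdd : IsStableVec ρ (Set.range fun k ↦ boost (t k) * lowerUnip (s k)) v := by
    refine hst.of_subset_compact_mul hρ isCompact_maximalCompact ?_
    rintro _ ⟨k, rfl⟩
    exact ⟨_, hcoset k, g k, hg k, inv_mul_cancel_right _ _⟩
  refine ⟨t, fun k ↦ ρ (lowerUnip (s k)) v,
    tendsto_neg_atTop_atBot.comp (tendsto_log_abs_apply_zero_atTop hy h1 h2), ?_, hbdd.subset ?_⟩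
  · have hs : Tendsto s atTop (𝓝 0) := by simpa using h1.neg
    have hcont : Continuous fun s ↦ ρ (lowerUnip s) v :=
      (hρ.comp continuous_lowerUnip).clm_apply continuous_const
    simpa [Function.comp_def, lowerUnip.map_zero_eq_one] using (hcont.tendsto 0).comp hs
  · rintro _ ⟨k, rfl⟩
    refine ⟨_, ⟨k, rfl⟩, ?_⟩
    rw [map_mul]
    rfl

theorem isAlmostBounded_atTop (hρ : Continuous fun g ↦ ρ g)
    (h : IsStableToward ρ ![0, 0, 1] v) : IsAlmostBounded (ρ.compAddChar boost) atTop v := by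
  have hweyl : IsStableToward ρ ![1, 0, 0] (ρ weyl v) := by
    simpa [lorAct_weyl] using h.map weyl
  obtain ⟨t, w, ht, hw, hbdd⟩ := hweyl.isAlmostBounded_atBot hρ
  refine ⟨fun k ↦ -t k, fun k ↦ ρ weyl (w k), tendsto_neg_atBot_atTop.comp ht, ?_,
    ((ρ weyl).lipschitz.isBounded_image hbdd).subset ?_⟩
  · have hv : ρ weyl (ρ weyl v) = v := by
      rw [← mul_apply_eq_comp, ← map_mul, weyl_mul_self, map_one, one_apply_eq_self]
    exact hv ▸ ((ρ weyl).continuous.tendsto _).comp hw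
  · rintro _ ⟨k, rfl⟩
    refine ⟨_, ⟨k, rfl⟩, ?_⟩
    change ρ weyl (ρ (boost (t k)) (w k)) = ρ (boost (-t k)) (ρ weyl (w k))
    rw [← weyl_mul_boost_mul_weyl, ← mul_apply_eq_comp, ← mul_apply_eq_comp, ← map_mul, ← map_mul,
      mul_assoc, mul_assoc, weyl_mul_self, mul_one]

theorem boost_apply_eq_self [FiniteDimensional ℝ V] (hρ : Continuous fun g ↦ ρ g)
    (h₁ : IsStableToward ρ ![1, 0, 0] v) (h₃ : IsStableToward ρ ![0, 0, 1] v) (t : ℝ) :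
    ρ (boost t) v = v :=
  (h₃.isAlmostBounded_atTop hρ).apply_eq_self (boost_mem_exponentialSums hρ)
    (h₁.isAlmostBounded_atBot hρ) t

end IsStableToward

/-- The stabilizer of the vector `v` under the representation `ρ`. -/
def vectorStabilizer {G V : Type*} [Group G] [NormedAddCommGroup V] [NormedSpace ℝ V]
    (ρ : G →* (V →L[ℝ] V)) (v : V) : Subgroup G :=
  (MulAction.stabilizer (V →L[ℝ] V)ˣ v).comap ρ.toHomUnits

section VectorStabilizer

variable {G V : Type*} [Group G] [NormedAddCommGroup V] [NormedSpace ℝ V]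
  {ρ : G →* (V →L[ℝ] V)} {v : V} {g : G}

theorem mem_vectorStabilizer : g ∈ vectorStabilizer ρ v ↔ ρ g v = v :=
  Iff.rfl

theorem conj_mem_vectorStabilizer_iff {h : G} :
    h * g * h⁻¹ ∈ vectorStabilizer ρ (ρ h v) ↔ g ∈ vectorStabilizer ρ v := by
  have hinv (w : V) : ρ h⁻¹ (ρ h w) = w := by
    rw [← mul_apply_eq_comp, ← map_mul, inv_mul_cancel, map_one, one_apply_eq_self]
  rw [mem_vectorStabilizer, mem_vectorStabilizer, ← mul_apply_eq_comp, ← map_mul,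
    inv_mul_cancel_right, map_mul, mul_apply_eq_comp]
  exact (Function.LeftInverse.injective hinv).eq_iff

theorem connectedComponent_one_subset_vectorStabilizer_of_apply [TopologicalSpace G]
    [ContinuousMul G] {h : G}
    (H : connectedComponent 1 ⊆ (vectorStabilizer ρ (ρ h v) : Set G)) :
    connectedComponent 1 ⊆ (vectorStabilizer ρ v : Set G) := by
  intro g hg
  have hcont : Continuous fun g ↦ h * g * h⁻¹ := by fun_prop
  have hconj := hcont.mapsTo_connectedComponent 1 hg
  rw [mul_one, mul_inv_cancel] at hconj
  exact conj_mem_vectorStabilizer_iff.1 (H hconj)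

end VectorStabilizer

namespace IsStableToward

variable {V : Type*} [NormedAddCommGroup V] [NormedSpace ℝ V] [FiniteDimensional ℝ V]
  {ρ : LorentzGrp 2 →* (V →L[ℝ] V)} {v : V} {y : Fin 3 → ℝ}

theorem conj_boost_mem_vectorStabilizer (hρ : Continuous fun g ↦ ρ g)
    (h₁ : IsStableToward ρ ![1, 0, 0] v) (h : IsStableToward ρ y v) (h2 : y 2 ≠ 0) (t : ℝ) :
    upperUnip (y 1 / y 2) * boost t * upperUnip (-(y 1 / y 2)) ∈ vectorStabilizer ρ v := by
  have hy₁ : IsStableToward ρ ![1, 0, 0] (ρ (upperUnip (-(y 1 / y 2))) v) := by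
    simpa [lorAct_upperUnip] using h₁.map (upperUnip (-(y 1 / y 2)))
  have hy₃ : IsStableToward ρ ![0, 0, 1] (ρ (upperUnip (-(y 1 / y 2))) v) := by
    have hy := h.map (upperUnip (-(y 1 / y 2)))
    rw [lorAct_upperUnip_neg_div_of_lorQ_eq_zero h.lorQ_eq_zero h2] at hy
    exact hy.of_smul
  rw [← conj_mem_vectorStabilizer_iff (h := upperUnip (-(y 1 / y 2))), ← mul_assoc, ← mul_assoc,
    ← upperUnip.map_add_eq_mul, neg_add_cancel, upperUnip.map_zero_eq_one, one_mul,
    mul_inv_cancel_right]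
  exact boost_apply_eq_self hρ hy₁ hy₃ t

theorem upperUnip_mem_vectorStabilizer_of_div_lt_one (hρ : Continuous fun g ↦ ρ g)
    (h₁ : IsStableToward ρ ![1, 0, 0] v) (h₃ : IsStableToward ρ ![0, 0, 1] v)
    (h : IsStableToward ρ y v) (h1 : y 1 ≠ 0) (h2 : y 2 ≠ 0) {s : ℝ} (hs : s / (y 1 / y 2) < 1) :
    upperUnip s ∈ vectorStabilizer ρ v := by
  set σ := y 1 / y 2
  have : σ ≠ 0 := div_ne_zero h1 h2
  let t := Real.log (1 - s / σ)
  have hs_eq : s = σ + Real.exp t * -σ := by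
    rw [Real.exp_log (sub_pos.2 hs)]
    field
  rw [hs_eq, upperUnip.map_add_eq_mul, ← boost_mul_upperUnip_mul_boost_neg, ← mul_assoc,
    ← mul_assoc]
  exact mul_mem (h₁.conj_boost_mem_vectorStabilizer hρ h h2 t) (h₁.boost_apply_eq_self hρ h₃ (-t))

/-- Half of the horocyclic group arises from commutators of two groups of hyperbolic translations
fixing `v`, the other half consists of the inverses. -/
theorem upperUnip_mem_vectorStabilizer (hρ : Continuous fun g ↦ ρ g)
    (h₁ : IsStableToward ρ ![1, 0, 0] v) (h₃ : IsStableToward ρ ![0, 0, 1] v)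
    (h : IsStableToward ρ y v) (h1 : y 1 ≠ 0) (h2 : y 2 ≠ 0) (s : ℝ) :
    upperUnip s ∈ vectorStabilizer ρ v := by
  by_cases hs : s / (y 1 / y 2) < 1
  · exact h₁.upperUnip_mem_vectorStabilizer_of_div_lt_one hρ h₃ h h1 h2 hs
  · have hs_neg : -s / (y 1 / y 2) < 1 := by
      rw [neg_div]
      linarith
    rw [← inv_mem_iff, ← upperUnip.map_neg_eq_inv]
    exact h₁.upperUnip_mem_vectorStabilizer_of_div_lt_one hρ h₃ h h1 h2 hs_neg

theorem lowerUnip_mem_vectorStabilizer (hρ : Continuous fun g ↦ ρ g)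
    (h₁ : IsStableToward ρ ![1, 0, 0] v) (h₃ : IsStableToward ρ ![0, 0, 1] v)
    (h : IsStableToward ρ y v) (h0 : y 0 ≠ 0) (h1 : y 1 ≠ 0) (s : ℝ) :
    lowerUnip s ∈ vectorStabilizer ρ v := by
  have h₁' : IsStableToward ρ ![0, 0, 1] (ρ weyl v) := by simpa [lorAct_weyl] using h₁.map weyl
  have h₃' : IsStableToward ρ ![1, 0, 0] (ρ weyl v) := by simpa [lorAct_weyl] using h₃.map weyl
  have h' : IsStableToward ρ ![y 2, y 1, y 0] (ρ weyl v) := by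
    simpa [lorAct_weyl] using h.map weyl
  rw [← conj_mem_vectorStabilizer_iff (h := weyl), lowerUnip_eq, weyl_inv, ← mul_assoc, ← mul_assoc,
    weyl_mul_self, one_mul, mul_assoc, weyl_mul_self, mul_one]
  exact h₃'.upperUnip_mem_vectorStabilizer hρ h₁' h' h1 h0 s

end IsStableToward

namespace LorentzGrp

theorem det_toMatrix_addChar_pos {n : ℕ} (φ : AddChar ℝ (LorentzGrp n)) (t : ℝ) :
    0 < (toMatrix (φ t)).det := by
  have hunit : (toMatrix (φ (t / 2))).det ≠ 0 :=
    (Matrix.GeneralLinearGroup.det (φ (t / 2)).1).ne_zero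
  rw [← add_halves t, φ.map_add_eq_mul, map_mul, Matrix.det_mul]
  exact mul_self_pos.2 hunit

theorem exists_toMatrix_eq_diagonal {m : LorentzGrp 2} (h₁ : lorAct m ![1, 0, 0] = ![1, 0, 0])
    (h₃ : lorAct m ![0, 0, 1] = ![0, 0, 1]) :
    ∃ a : ℝ, a ^ 2 = 1 ∧ toMatrix m = Matrix.diagonal ![1, a, 1] := by
  obtain ⟨a, ha⟩ : ∃ a, lorAct m ![0, 1, 0] = ![0, a, 0] := by
    have hB₁ := lorB_lorAct m ![0, 1, 0] ![1, 0, 0]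
    have hB₃ := lorB_lorAct m ![0, 1, 0] ![0, 0, 1]
    rw [h₁, lorB_two, lorB_two] at hB₁
    rw [h₃, lorB_two, lorB_two] at hB₃
    refine ⟨lorAct m ![0, 1, 0] 1, ?_⟩
    ext i
    fin_cases i
    · simpa using hB₃
    · rfl
    · simpa using hB₁
  refine ⟨a, ?_, Matrix.mulVec_injective (funext fun x ↦ ?_)⟩
  · have hQ := lorQ_lorAct m ![0, 1, 0]
    rw [ha, lorQ_two, lorQ_two] at hQ
    simpa using hQ
  · have hx : x = x 0 • ![1, 0, 0] + x 1 • ![0, 1, 0] + x 2 • ![0, 0, 1] := by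
      ext i
      fin_cases i <;> simp
    change lorAct m x = _
    rw [hx, lorAct_add, lorAct_add, lorAct_smul, lorAct_smul, lorAct_smul, h₁, ha, h₃]
    ext i
    fin_cases i <;> simp [Matrix.mulVec_diagonal, mul_comm]

theorem eq_one_of_lorAct_eq {m : LorentzGrp 2} (h₁ : lorAct m ![1, 0, 0] = ![1, 0, 0])
    (h₃ : lorAct m ![0, 0, 1] = ![0, 0, 1]) (hdet : 0 < (toMatrix m).det) : m = 1 := by
  obtain ⟨a, ha, hm⟩ := exists_toMatrix_eq_diagonal h₁ h₃
  have ha_pos : 0 < a := by simpa [hm, Fin.prod_univ_three] using hdet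
  obtain rfl : a = 1 := (pow_eq_one_iff_of_nonneg ha_pos.le two_ne_zero).1 ha
  refine Subtype.ext (Units.ext (hm.trans ?_))
  ext i j
  fin_cases i <;> fin_cases j <;> rfl

theorem exists_eq_upperUnip {k : LorentzGrp 2} (hk : lorAct k ![1, 0, 0] = ![1, 0, 0])
    (hdet : 0 < (toMatrix k).det) : ∃ s, k = upperUnip s := by
  set y := lorAct k ![0, 0, 1]
  have hy2 : y 2 = 1 := by
    have hB := lorB_lorAct k ![0, 0, 1] ![1, 0, 0]
    rw [hk, lorB_two, lorB_two] at hB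
    simpa using hB
  have hy : lorQ 2 y = 0 := by
    rw [lorQ_lorAct, lorQ_two]
    simp
  have hone : upperUnip (-(y 1 / y 2)) * k = 1 := by
    refine eq_one_of_lorAct_eq ?_ ?_ ?_
    · rw [lorAct_mul, hk, lorAct_upperUnip]
      simp
    · rw [lorAct_mul, lorAct_upperUnip_neg_div_of_lorQ_eq_zero hy (by simp [hy2]), hy2, one_smul]
    · rw [map_mul, Matrix.det_mul]
      exact mul_pos (det_toMatrix_addChar_pos upperUnip _) hdet
  refine ⟨y 1 / y 2, (inv_mul_eq_one.1 ?_).symm⟩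
  rwa [← upperUnip.map_neg_eq_inv]

variable {H : Subgroup (LorentzGrp 2)}

theorem boost_mem (hU : ∀ s, upperUnip s ∈ H) (hL : ∀ s, lowerUnip s ∈ H)
    (t : ℝ) : boost t ∈ H := by
  rw [← mul_div_cancel₀ t two_ne_zero, boost_two_mul]
  exact mul_mem (mul_mem (mul_mem (hL _) (hU _)) (hL _)) (hU _)

theorem mem_of_det_pos (hU : ∀ s, upperUnip s ∈ H) (hL : ∀ s, lowerUnip s ∈ H)
    {g : LorentzGrp 2} (hdet : 0 < (toMatrix g).det) (hpos : 0 < lorAct g ![1, 0, 0] 0) :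
    g ∈ H := by
  set x := lorAct g ![1, 0, 0]
  have hx : lorQ 2 x = 0 := by
    rw [lorQ_lorAct, lorQ_two]
    simp
  let b := boost (-Real.log (x 0)) * lowerUnip (-(x 1 / x 0))
  have hb : b ∈ H := mul_mem (boost_mem hU hL _) (hL _)
  obtain ⟨s, hs⟩ : ∃ s, b * g = upperUnip s := by
    refine exists_eq_upperUnip ?_ ?_
    · rw [lorAct_mul, lorAct_mul, lorAct_lowerUnip_neg_div_of_lorQ_eq_zero hx hpos.ne', lorAct_smul,
        lorAct_boost, Real.exp_neg, Real.exp_log hpos]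
      simp [hpos.ne']
    · rw [map_mul, map_mul, Matrix.det_mul, Matrix.det_mul]
      exact mul_pos (mul_pos (det_toMatrix_addChar_pos boost _)
        (det_toMatrix_addChar_pos lowerUnip _)) hdet
  exact (mul_mem_cancel_left hb).1 (hs ▸ hU s)

theorem connectedComponent_one_subset (hU : ∀ s, upperUnip s ∈ H)
    (hL : ∀ s, lowerUnip s ∈ H) : connectedComponent (1 : LorentzGrp 2) ⊆ H := by
  have hcont : Continuous fun g : LorentzGrp 2 ↦ lorAct g ![1, 0, 0] 0 := by fun_prop
  have hcont_det : Continuous fun g : LorentzGrp 2 ↦ (toMatrix g).det :=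
    continuous_toMatrix.matrix_det
  have hopen : IsOpen (H : Set (LorentzGrp 2)) := by
    refine H.isOpen_of_mem_nhds (g := 1) ?_
    filter_upwards [hcont.tendsto 1 |>.eventually_const_lt (u := 0) (by simp [lorAct_one]),
      hcont_det.tendsto 1 |>.eventually_const_lt (u := 0) (by simp)] with g hg hdet
    exact mem_of_det_pos hU hL hdet hg
  exact IsClopen.connectedComponent_subset ⟨H.isClosed_of_isOpen hopen, hopen⟩ H.one_mem

end LorentzGrp

namespace IsStableToward

variable {V : Type*} [NormedAddCommGroup V] [NormedSpace ℝ V] [FiniteDimensional ℝ V]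
  {ρ : LorentzGrp 2 →* (V →L[ℝ] V)} {v : V}

theorem connectedComponent_one_subset_vectorStabilizer_of_coordinate_axes
    (hρ : Continuous fun g ↦ ρ g) {y : Fin 3 → ℝ} (h₁ : IsStableToward ρ ![1, 0, 0] v)
    (h₃ : IsStableToward ρ ![0, 0, 1] v) (h : IsStableToward ρ y v)
    (hne₁ : ∀ c : ℝ, y ≠ c • ![1, 0, 0]) (hne₃ : ∀ c : ℝ, y ≠ c • ![0, 0, 1]) :
    connectedComponent 1 ⊆ (vectorStabilizer ρ v : Set (LorentzGrp 2)) := by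
  have hy := h.lorQ_eq_zero
  have h0 : y 0 ≠ 0 := fun h0 ↦
    hne₃ _ (eq_smul_of_lorQ_eq_zero_of_apply_zero_eq_zero hy h0)
  have h2 : y 2 ≠ 0 := fun h2 ↦
    hne₁ _ (eq_smul_of_lorQ_eq_zero_of_apply_two_eq_zero hy h2)
  have h1 : y 1 ≠ 0 := fun h1 ↦ by
    rw [lorQ_two, h1] at hy
    simp [h0, h2] at hy
  exact LorentzGrp.connectedComponent_one_subset (h₁.upperUnip_mem_vectorStabilizer hρ h₃ h h1 h2)
    (h₁.lowerUnip_mem_vectorStabilizer hρ h₃ h h0 h1)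

theorem connectedComponent_one_subset_vectorStabilizer
    (hρ : Continuous fun g ↦ ρ g) {p p' p'' : Fin 3 → ℝ} (hp : IsStableToward ρ p v)
    (hp' : IsStableToward ρ p' v) (hp'' : IsStableToward ρ p'' v) (hne' : ∀ c : ℝ, p' ≠ c • p)
    (hne'' : ∀ c : ℝ, p'' ≠ c • p) (hne : ∀ c : ℝ, p'' ≠ c • p') :
    connectedComponent 1 ⊆ (vectorStabilizer ρ v : Set (LorentzGrp 2)) := by
  obtain ⟨h, c, c', hc, hc', hhp, hhp'⟩ := exists_lorAct_eq_smul_and_lorAct_eq_smul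
    hp.lorQ_eq_zero hp.ne_zero hp'.lorQ_eq_zero hne'
  have h₃ : IsStableToward ρ ![0, 0, 1] (ρ h v) := (hhp ▸ hp.map h).of_smul
  have h₁ : IsStableToward ρ ![1, 0, 0] (ρ h v) := (hhp' ▸ hp'.map h).of_smul
  refine connectedComponent_one_subset_vectorStabilizer_of_apply
    (connectedComponent_one_subset_vectorStabilizer_of_coordinate_axes hρ h₁ h₃ (hp''.map h) ?_ ?_)
  · intro a ha
    refine hne (a / c') (lorAct_injective h ?_)
    rw [ha, lorAct_smul, hhp', smul_smul, div_mul_cancel₀ _ hc']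
  · intro a ha
    refine hne'' (a / c) (lorAct_injective h ?_)
    rw [ha, lorAct_smul, hhp, smul_smul, div_mul_cancel₀ _ hc]

end IsStableToward

/-- (`O(1,2)` acting on `ℝ³` with `q(x) = 2x₁x₃ + x₂²`.) If three sequences in
`O(1,2)` have `λ_k • g_k⁻¹(o)` converging to three pairwise non-proportional lightlike vectors
`p, p', p''`, then every vector stable under each of the three sequences is fixed by the identity
component of `O(1,2)`. -/
theorem stable_vector_fixed_by_identity_component_O12
    (V : Type*) [NormedAddCommGroup V] [NormedSpace ℝ V] [FiniteDimensional ℝ V]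
    (ρ : LorentzGrp 2 →* (V →L[ℝ] V)) (hρ : Continuous fun g => ρ g)
    (g g' g'' : ℕ → LorentzGrp 2)
    (p p' p'' : Fin 3 → ℝ)
    (hp0 : p ≠ 0) (hp0' : p' ≠ 0) (hp0'' : p'' ≠ 0)
    (hq : lorQ 2 p = 0) (hq' : lorQ 2 p' = 0) (hq'' : lorQ 2 p'' = 0)
    (hne1 : ∀ c : ℝ, p' ≠ c • p) (hne2 : ∀ c : ℝ, p'' ≠ c • p)
    (hne3 : ∀ c : ℝ, p'' ≠ c • p')
    (lam lam' lam'' : ℕ → ℝ)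
    (hlim : Tendsto (fun k => lam k • lorAct (g k)⁻¹ (basePt 2)) atTop (𝓝 p))
    (hlim' : Tendsto (fun k => lam' k • lorAct (g' k)⁻¹ (basePt 2)) atTop (𝓝 p'))
    (hlim'' : Tendsto (fun k => lam'' k • lorAct (g'' k)⁻¹ (basePt 2)) atTop (𝓝 p''))
    (v : V)
    (hst : IsStableVec ρ (Set.range g) v)
    (hst' : IsStableVec ρ (Set.range g') v)
    (hst'' : IsStableVec ρ (Set.range g'') v) :
    ∀ h ∈ connectedComponent (1 : LorentzGrp 2), ρ h v = v := by
  have hp : IsStableToward ρ p v :=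
    ⟨_, ⟨hp0, hq, g, lam, Set.mem_range_self, hlim⟩, hst⟩
  have hp' : IsStableToward ρ p' v :=
    ⟨_, ⟨hp0', hq', g', lam', Set.mem_range_self, hlim'⟩, hst'⟩
  have hp'' : IsStableToward ρ p'' v :=
    ⟨_, ⟨hp0'', hq'', g'', lam'', Set.mem_range_self, hlim''⟩, hst''⟩
  exact hp.connectedComponent_one_subset_vectorStabilizer hρ hp' hp'' hne1 hne2 hne3
end
end

section
/- Let (X, d_X) and (Y, d_Y) be metric spaces such that: X is quasi-geodesic; X and Y are uniformly discrete; and X and Y have bounded geometry (for every r > 0 there is N_r ∈ ℕ such that every closed ball of radius r contains at most N_r points). Let α : X → Y be a coarse embedding. Then there exist a constant k ∈ ℕ and constants a > 0, b ≥ 0 such that for every x₀ ∈ X and every r ≥ 0, the number of points of the closed ball B_X(x₀, r) is at most k times the number of points of the closed ball B_Y(α(x₀), a·r + b). -/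
open Filter Metric Set Bornology

noncomputable section

/-- A coarse embedding between metric spaces: there are nondecreasing control functions
`φ⁻, φ⁺ : [0,∞) → ℝ` tending to `+∞` with
`φ⁻(d(x,y)) ≤ d(α x, α y) ≤ φ⁺(d(x,y))` for all `x, y`. -/
def IsCoarseEmbedding {X Y : Type*} [MetricSpace X] [MetricSpace Y] (α : X → Y) : Prop :=
  ∃ φm φp : ℝ → ℝ,
    MonotoneOn φm (Set.Ici 0) ∧ MonotoneOn φp (Set.Ici 0) ∧
    Tendsto φm atTop atTop ∧ Tendsto φp atTop atTop ∧
    ∀ x y : X, φm (dist x y) ≤ dist (α x) (α y) ∧ dist (α x) (α y) ≤ φp (dist x y)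

/-- A metric space is quasi-geodesic if there are `a, b > 0` such that any two points are joined
by an `(a,b)`-quasi-geodesic. -/
def QuasiGeodesicSpace (X : Type*) [MetricSpace X] : Prop :=
  ∃ a : ℝ, 0 < a ∧ ∃ b : ℝ, 0 < b ∧ ∀ x y : X, ∃ L : ℝ, 0 ≤ L ∧ ∃ γ : ℝ → X,
    γ 0 = x ∧ γ L = y ∧ ∀ t ∈ Set.Icc (0:ℝ) L, ∀ t' ∈ Set.Icc (0:ℝ) L,
      (1 / a) * |t - t'| - b ≤ dist (γ t) (γ t') ∧ dist (γ t) (γ t') ≤ a * |t - t'| + b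

/-- A metric space is uniformly discrete if distinct points are at distance at least `C > 0`. -/
def UniformlyDiscrete (X : Type*) [MetricSpace X] : Prop :=
  ∃ C : ℝ, 0 < C ∧ ∀ x y : X, x ≠ y → C ≤ dist x y

/-- A metric space has bounded geometry if for every `r > 0` there is `N` such that every closed
ball of radius `r` has at most `N` points. -/
def BoundedGeometry (X : Type*) [MetricSpace X] : Prop :=
  ∀ r : ℝ, 0 < r → ∃ N : ℕ, ∀ x : X,
    (Metric.closedBall x r).Finite ∧ (Metric.closedBall x r).ncard ≤ N

/-! In a quasi-geodesic space, two points at distance `d` are joined by a chain whose steps have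
bounded length and whose number of steps is at most affine in `d`. A coarse embedding moves the ends
of each step a bounded distance apart, so it stretches distances at most affinely and maps
`B(x₀, r)` into `B(α x₀, a r + b)`. Its fibres have bounded diameter, hence a uniformly bounded
number of points, and counting the points of `B(x₀, r)` fibre by fibre gives the estimate. -/

/-- Bornologous maps in the sense of Roe, between metric spaces with their bounded coarse structure.
They keep the upper control `φ⁺` of a coarse embedding only, encoded as a bound `S` for each scale
`R` instead of a control function. -/
def Bornologous {X Y : Type*} [PseudoMetricSpace X] [PseudoMetricSpace Y] (f : X → Y) : Prop :=
  ∀ R : ℝ, ∃ S : ℝ, ∀ x y : X, dist x y ≤ R → dist (f x) (f y) ≤ S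

theorem encard_preimage_le_mul_encard {X Y : Type*} {f : X → Y} {t : Set Y} {k : ℕ∞}
    (hk : ∀ y ∈ t, (f ⁻¹' {y}).encard ≤ k) : (f ⁻¹' t).encard ≤ k * t.encard := by
  rcases t.finite_or_infinite with ht | ht
  · induction t, ht using Set.Finite.induction_on with
    | empty => simp
    | @insert y t hy _ ih =>
      have hfib : (f ⁻¹' {y}).encard ≤ k := hk y (mem_insert y t)
      have hrest : (f ⁻¹' t).encard ≤ k * t.encard := ih fun z hz => hk z (mem_insert_of_mem y hz)
      calc (f ⁻¹' insert y t).encard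
          = (f ⁻¹' t ∪ f ⁻¹' {y}).encard := by rw [← preimage_union, union_singleton]
        _ ≤ (f ⁻¹' t).encard + (f ⁻¹' {y}).encard := encard_union_le _ _
        _ ≤ k * t.encard + k := add_le_add hrest hfib
        _ = k * (insert y t).encard := by rw [encard_insert_of_notMem hy, mul_add, mul_one]
  · rcases eq_or_ne k 0 with rfl | hk0
    · have hempty : f ⁻¹' t = ∅ := eq_empty_of_forall_notMem fun x hx =>
        (hk (f x) hx).not_gt (encard_pos.2 ⟨x, rfl⟩)
      simp [hempty]
    · simp [ht.encard_eq, ENat.mul_top hk0]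

theorem QuasiGeodesicSpace.exists_chain {X : Type*} [MetricSpace X] (hX : QuasiGeodesicSpace X) :
    ∃ c A B : ℝ, 0 < A ∧ 0 ≤ B ∧ ∀ x y : X, ∃ (n : ℕ) (p : ℕ → X),
      p 0 = x ∧ p n = y ∧ (n : ℝ) ≤ A * dist x y + B ∧ ∀ i, dist (p i) (p (i + 1)) ≤ c := by
  obtain ⟨a, ha, b, hb, hγ⟩ := hX
  refine ⟨a + b, a, a * b + 1, ha, by positivity, fun x y => ?_⟩
  obtain ⟨L, hL, γ, rfl, rfl, hγ⟩ := hγ x y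
  have hmem (i : ℕ) : min (i : ℝ) L ∈ Icc 0 L := ⟨le_min i.cast_nonneg hL, min_le_right _ _⟩
  -- Capping the parameter at `L` makes the last, possibly shorter, step end at `γ L`.
  refine ⟨⌈L⌉₊, fun i => γ (min i L), ?_, ?_, ?_, fun i => ?_⟩
  · simp [hL]
  · simp [Nat.le_ceil L]
  · have hlower : L / a - b ≤ dist (γ 0) (γ L) := by
      simpa [abs_of_nonneg hL, inv_mul_eq_div] using (hγ 0 ⟨le_rfl, hL⟩ L ⟨hL, le_rfl⟩).1
    have hlength : L ≤ (dist (γ 0) (γ L) + b) * a := (div_le_iff₀ ha).1 (by linarith)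
    linarith [Nat.ceil_lt_add_one hL]
  · have hparam : |min (i : ℝ) L - min ((i + 1 : ℕ) : ℝ) L| ≤ 1 :=
      (abs_min_sub_min_le_max _ _ _ _).trans (by simp)
    calc dist (γ (min i L)) (γ (min (i + 1 : ℕ) L))
        ≤ a * |min (i : ℝ) L - min ((i + 1 : ℕ) : ℝ) L| + b := (hγ _ (hmem i) _ (hmem (i + 1))).2
      _ ≤ a * 1 + b := by gcongr
      _ = a + b := by rw [mul_one]

theorem Bornologous.exists_dist_le_mul_dist_add {X Y : Type*} [MetricSpace X]
    [PseudoMetricSpace Y] {f : X → Y} (hf : Bornologous f) (hX : QuasiGeodesicSpace X) :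
    ∃ a b : ℝ, 0 < a ∧ 0 ≤ b ∧ ∀ x y : X, dist (f x) (f y) ≤ a * dist x y + b := by
  obtain ⟨c, A, B, hA, hB, hchain⟩ := hX.exists_chain
  obtain ⟨S, hS⟩ := hf c
  set M := max S 1
  have : 0 < M := lt_max_of_lt_right one_pos
  refine ⟨A * M, B * M, by positivity, by positivity, fun x y => ?_⟩
  obtain ⟨n, p, rfl, rfl, hn, hp⟩ := hchain x y
  have hstep (i : ℕ) : dist (f (p i)) (f (p (i + 1))) ≤ M :=
    (hS _ _ (hp i)).trans (le_max_left S 1)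
  calc dist (f (p 0)) (f (p n))
      ≤ ∑ _i ∈ Finset.range n, M :=
        dist_le_range_sum_of_dist_le (f := f ∘ p) n fun {i} _ => hstep i
    _ = n * M := by simp
    _ ≤ (A * dist (p 0) (p n) + B) * M := by gcongr
    _ = A * M * dist (p 0) (p n) + B * M := by ring

theorem BoundedGeometry.exists_encard_closedBall_le {X : Type*} [MetricSpace X]
    (hX : BoundedGeometry X) (r : ℝ) : ∃ N : ℕ, ∀ x : X, (closedBall x r).encard ≤ N := by
  obtain ⟨N, hN⟩ := hX (max r 1) (lt_max_of_lt_right one_pos)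
  refine ⟨N, fun x => ?_⟩
  calc (closedBall x r).encard
      ≤ (closedBall x (max r 1)).encard :=
        encard_le_encard (closedBall_subset_closedBall (le_max_left r 1))
    _ ≤ N := encard_le_coe_iff_finite_ncard_le.2 (hN x)

theorem BoundedGeometry.finite_closedBall {X : Type*} [MetricSpace X] (hX : BoundedGeometry X)
    (x : X) (r : ℝ) : (closedBall x r).Finite :=
  have ⟨_, hN⟩ := hX.exists_encard_closedBall_le r
  finite_of_encard_le_coe (hN x)

namespace IsCoarseEmbedding

variable {X Y : Type*} [MetricSpace X] [MetricSpace Y] {α : X → Y}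

theorem bornologous (hα : IsCoarseEmbedding α) : Bornologous α := by
  obtain ⟨_, φp, -, hφp, -, -, hα⟩ := hα
  intro R
  refine ⟨φp (max R 0), fun x y hxy => (hα x y).2.trans ?_⟩
  exact hφp dist_nonneg (le_max_right R 0) (le_max_of_le_left hxy)

theorem exists_dist_le_of_map_eq (hα : IsCoarseEmbedding α) :
    ∃ R : ℝ, ∀ x y : X, α x = α y → dist x y ≤ R := by
  obtain ⟨φm, _, -, -, hφm, -, hα⟩ := hα
  obtain ⟨R, hR⟩ := (hφm.eventually_gt_atTop 0).exists_forall_of_atTop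
  refine ⟨R, fun x y hxy => ?_⟩
  by_contra! hlt
  have hnonpos : φm (dist x y) ≤ 0 := by simpa [hxy] using (hα x y).1
  exact (hR _ hlt.le).not_ge hnonpos

theorem exists_encard_preimage_singleton_le (hα : IsCoarseEmbedding α) (hX : BoundedGeometry X) :
    ∃ k : ℕ, ∀ y : Y, (α ⁻¹' {y}).encard ≤ k := by
  obtain ⟨R, hR⟩ := hα.exists_dist_le_of_map_eq
  obtain ⟨k, hk⟩ := hX.exists_encard_closedBall_le R
  refine ⟨k, fun y => ?_⟩
  rcases (α ⁻¹' {y}).eq_empty_or_nonempty with hempty | ⟨x, rfl⟩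
  · simp [hempty]
  · exact (encard_le_encard fun z hz => hR z x hz).trans (hk x)

end IsCoarseEmbedding

theorem card_ball_le_of_coarseEmbedding_general
    {X Y : Type*} [MetricSpace X] [PseudoMetricSpace Y] (hX : QuasiGeodesicSpace X)
    {f : X → Y} (hf : Bornologous f) {k : ℕ∞} (hk : ∀ y, (f ⁻¹' {y}).encard ≤ k) :
    ∃ a b : ℝ, 0 < a ∧ 0 ≤ b ∧ ∀ (x₀ : X) (r : ℝ),
      (closedBall x₀ r).encard ≤ k * (closedBall (f x₀) (a * r + b)).encard := by
  obtain ⟨a, b, ha, hb, hdist⟩ := hf.exists_dist_le_mul_dist_add hX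
  refine ⟨a, b, ha, hb, fun x₀ r => ?_⟩
  have hball : closedBall x₀ r ⊆ f ⁻¹' closedBall (f x₀) (a * r + b) := fun x hx =>
    calc dist (f x) (f x₀) ≤ a * dist x x₀ + b := hdist x x₀
      _ ≤ a * r + b := by gcongr; exact hx
  exact (encard_le_encard hball).trans (encard_preimage_le_mul_encard fun y _ => hk y)

/-- If `X` is quasi-geodesic, `X` and `Y` are uniformly discrete with bounded
geometry, and `α : X → Y` is a coarse embedding, then there are `k ∈ ℕ`, `a > 0`, `b ≥ 0` such
that for every `x₀` and `r ≥ 0`, the cardinality of `B_X(x₀, r)` is at most `k` times the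
cardinality of `B_Y(α x₀, a r + b)`. -/
theorem card_ball_le_of_coarseEmbedding
    {X Y : Type*} [MetricSpace X] [MetricSpace Y]
    (hqg : QuasiGeodesicSpace X)
    (hudX : UniformlyDiscrete X) (hudY : UniformlyDiscrete Y)
    (hbgX : BoundedGeometry X) (hbgY : BoundedGeometry Y)
    (α : X → Y) (hα : IsCoarseEmbedding α) :
    ∃ (k : ℕ) (a b : ℝ), 0 < a ∧ 0 ≤ b ∧
      ∀ (x₀ : X) (r : ℝ), 0 ≤ r →
        (Metric.closedBall x₀ r).ncard ≤ k * (Metric.closedBall (α x₀) (a * r + b)).ncard := by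
  obtain ⟨k, hk⟩ := hα.exists_encard_preimage_singleton_le hbgX
  obtain ⟨a, b, ha, hb, hball⟩ := card_ball_le_of_coarseEmbedding_general hqg hα.bornologous hk
  refine ⟨k, a, b, ha, hb, fun x₀ r _ => ?_⟩
  have hfin : (closedBall (α x₀) (a * r + b)).Finite := hbgY.finite_closedBall _ _
  have hle : (closedBall x₀ r).encard ≤ (k * (closedBall (α x₀) (a * r + b)).ncard : ℕ) := by
    simpa [hfin.cast_ncard_eq] using hball x₀ r
  exact (encard_le_coe_iff_finite_ncard_le.1 hle).2
end
end
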